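/- Define ψ_3^1 := i Σ_{j=1}^q Σ_{|α|+|β|=2, α''≠0} (c_{α,β+e_j}/(α!β!)) · [2|λ_j|⟨|λ''|,α''⟩ / ((⟨|λ''|,α''⟩+⟨|λ'|,β'⟩)(⟨|λ''|,α''⟩+⟨|λ'|,β'⟩+|λ_j|))] z̄^α z^β w_j − i Σ_{j=q+1}^n Σ_{|α|+|β|=2, β'≠0} (c_{α+e_j,β}/(α!β!)) · [2|λ_j|⟨|λ'|,β'⟩ / ((⟨|λ''|,α''⟩+⟨|λ'|,β'⟩)(⟨|λ''|,α''⟩+⟨|λ'|,β'⟩+|λ_j|))] z̄^α z^β w̄_j, where e_j denotes the j-th standard unit multiindex. Then T ψ_3^1 = Σ_{j=1}^q 2λ_j w_j (−i ∂ψ_3^0/∂z_j + ∂φ_3/∂z_j) + Σ_{j=q+1}^n 2λ_j w̄_j (i ∂ψ_3^0/∂z̄_j + ∂φ_3/∂z̄_j). -/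

import Mathlib

/-!
Statement 0: the action of the derivation
`T = Σ_{j≤q} 2i|λ_j| z_j ∂/∂z_j + Σ_{j>q} 2i|λ_j| z̄_j ∂/∂z̄_j`
on the polynomial ring over ℂ in the 4n formal variables
`z_1,…,z_n, z̄_1,…,z̄_n, w_1,…,w_n, w̄_1,…,w̄_n`, at the level of coefficients.
We encode the variables as `Fin 4 × Fin n`, where `(0,j) = z_j`, `(1,j) = z̄_j`,
`(2,j) = w_j`, `(3,j) = w̄_j`.
-/

open MvPolynomial

attribute [local instance] Classical.propDecidable

noncomputable section

abbrev Var (n : ℕ) := Fin 4 × Fin n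

def zV {n : ℕ} (j : Fin n) : Var n := (0, j)
def zbV {n : ℕ} (j : Fin n) : Var n := (1, j)
def wV {n : ℕ} (j : Fin n) : Var n := (2, j)
def wbV {n : ℕ} (j : Fin n) : Var n := (3, j)

/-- The derivation `T = Σ_{1≤j≤q} 2i|λ_j| z_j ∂/∂z_j + Σ_{q+1≤j≤n} 2i|λ_j| z̄_j ∂/∂z̄_j`. -/
def Tder {n : ℕ} (q : ℕ) (lam : Fin n → ℝ) (g : MvPolynomial (Var n) ℂ) :
    MvPolynomial (Var n) ℂ :=
  ∑ j : Fin n,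
    if (j : ℕ) < q then
      C (2 * Complex.I * ((|lam j| : ℝ) : ℂ)) * X (zV j) * pderiv (zV j) g
    else
      C (2 * Complex.I * ((|lam j| : ℝ) : ℂ)) * X (zbV j) * pderiv (zbV j) g

/-- The exponent function of the monomial `z̄^α z^β w̄^γ w^δ`. -/
def mIdx {n : ℕ} (α β γ δ : Fin n → ℕ) : Var n →₀ ℕ :=
  Finsupp.equivFunOnFinite.symm fun v =>
    if v.1 = 0 then β v.2
    else if v.1 = 1 then α v.2
    else if v.1 = 2 then δ v.2
    else γ v.2

/-- The condition `(α'', β') = (0,0)`. -/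
def cond0 {n : ℕ} (q : ℕ) (α β : Fin n → ℕ) : Prop :=
  ∀ j : Fin n, (q ≤ (j : ℕ) → α j = 0) ∧ ((j : ℕ) < q → β j = 0)

/-- `⟨|λ''|, α''⟩ + ⟨|λ'|, β'⟩`. -/
def wgt {n : ℕ} (q : ℕ) (lam : Fin n → ℝ) (α β : Fin n → ℕ) : ℝ :=
  ∑ j : Fin n, if (j : ℕ) < q then |lam j| * β j else |lam j| * α j

/-- `⟨λ'', α''⟩ + ⟨λ', β'⟩` (signed weight). -/
def swgt {n : ℕ} (q : ℕ) (lam : Fin n → ℝ) (α β : Fin n → ℕ) : ℝ :=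
  ∑ j : Fin n, if (j : ℕ) < q then lam j * β j else lam j * α j

/-- `α! = α_1! ⋯ α_n!`. -/
def factM {n : ℕ} (α : Fin n → ℕ) : ℕ := ∏ j : Fin n, (α j).factorial

/-- `⟨|λ''|, α''⟩`. -/
def wA {n : ℕ} (q : ℕ) (lam : Fin n → ℝ) (α : Fin n → ℕ) : ℝ :=
  ∑ j : Fin n, if q ≤ (j : ℕ) then |lam j| * α j else 0

/-- `⟨|λ'|, β'⟩`. -/
def wB {n : ℕ} (q : ℕ) (lam : Fin n → ℝ) (β : Fin n → ℕ) : ℝ :=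
  ∑ j : Fin n, if (j : ℕ) < q then |lam j| * β j else 0

/-- The `j`-th standard unit multiindex. -/
def eIdx {n : ℕ} (j : Fin n) : Fin n → ℕ := fun t => if t = j then 1 else 0

/-!
Call `x_j` the variable differentiated by `T` (`z_j` for `j ≤ q`, `z̄_j` for `j > q`) and `y_j` the
variable multiplying it in the claim (`w_j`, resp. `w̄_j`). On monomials `T` acts as the scalar
`2iW`, where `W(m) = ∑ |λ_j| m(x_j)`, and `ψ₃⁰` arises from `φ₃` by multiplying the `m`-th
coefficient by `iS/W`, where `S(m) = ∑ λ_j m(x_j)`. As `S = ⟨λ'',α''⟩ + ⟨λ',β'⟩` is the difference,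
and `W` the sum, of `⟨|λ''|,α''⟩` and `⟨|λ'|,β'⟩`, both halves of `ψ₃¹` take the form
`∑ y_j · i(|λ_j|S - λ_jW)/(W(W + |λ_j|)) · ∂φ₃/∂x_j`. Since `∂/∂x_j` shifts `W` by `|λ_j|` and `S`
by `λ_j`, the claim becomes the scalar identity
`W · (|λ|S - λW)/(W(W + |λ|)) = |λ|(S + λ)/(W + |λ|) - λ`, valid for every polynomial `φ₃`.
-/

section Diagonal

variable {σ R : Type*} [CommSemiring R]

/-- The operator on polynomials that is diagonal in the monomial basis, multiplying the `m`-th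
coefficient by `μ m`. -/
def diagonalMap (μ : (σ →₀ ℕ) → R) : MvPolynomial σ R →ₗ[R] MvPolynomial σ R :=
  (basisMonomials σ R).constr R fun m => monomial m (μ m)

theorem diagonalMap_monomial (μ : (σ →₀ ℕ) → R) (m : σ →₀ ℕ) (r : R) :
    diagonalMap μ (monomial m r) = monomial m (μ m * r) := by
  have h : monomial m r = r • basisMonomials σ R m := by simp [smul_monomial]
  rw [h, map_smul, diagonalMap, Module.Basis.constr_basis, smul_monomial, smul_eq_mul, mul_comm]

@[simp]
theorem coeff_diagonalMap (μ : (σ →₀ ℕ) → R) (m : σ →₀ ℕ) (p : MvPolynomial σ R) :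
    coeff m (diagonalMap μ p) = μ m * coeff m p := by
  induction p using MvPolynomial.induction_on' with
  | monomial k r =>
    rw [diagonalMap_monomial, coeff_monomial, coeff_monomial]
    split_ifs with h
    · rw [h]
    · rw [mul_zero]
  | add p q hp hq => rw [map_add, coeff_add, coeff_add, hp, hq, mul_add]

theorem diagonalMap_diagonalMap (μ ν : (σ →₀ ℕ) → R) (p : MvPolynomial σ R) :
    diagonalMap μ (diagonalMap ν p) = diagonalMap (fun m => μ m * ν m) p := by
  ext m
  simp [mul_assoc]

theorem diagonalMap_X_mul (μ : (σ →₀ ℕ) → R) (i : σ) (p : MvPolynomial σ R) :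
    diagonalMap μ (X i * p) = X i * diagonalMap (fun m => μ (m + Finsupp.single i 1)) p := by
  ext m
  simp only [coeff_diagonalMap, coeff_X_mul']
  split_ifs with h
  · rw [tsub_add_cancel_of_le (by simpa [Nat.one_le_iff_ne_zero] using h)]
  · rw [mul_zero]

theorem pderiv_diagonalMap (μ : (σ →₀ ℕ) → R) (i : σ) (p : MvPolynomial σ R) :
    pderiv i (diagonalMap μ p) =
      diagonalMap (fun m => μ (m + Finsupp.single i 1)) (pderiv i p) := by
  ext m
  simp [coeff_pderiv, mul_assoc]

theorem coeff_X_mul_pderiv (i : σ) (m : σ →₀ ℕ) (p : MvPolynomial σ R) :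
    coeff m (X i * pderiv i p) = m i * coeff m p := by
  induction p using MvPolynomial.induction_on' with
  | monomial k r =>
    rw [X_mul_pderiv_monomial, coeff_smul, coeff_monomial]
    split_ifs with h
    · rw [h, nsmul_eq_mul]
    · rw [smul_zero, mul_zero]
  | add p q hp hq => rw [map_add, mul_add, coeff_add, coeff_add, hp, hq, mul_add]

theorem coeff_X_mul_eq_zero {i : σ} {m : σ →₀ ℕ} {p : MvPolynomial σ R}
    (h : ∀ k, m = Finsupp.single i 1 + k → coeff k p = 0) : coeff m (X i * p) = 0 := by
  rw [coeff_X_mul', ite_eq_right_iff]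
  intro hi
  exact h _ (add_tsub_cancel_of_le (by simpa [Nat.one_le_iff_ne_zero] using hi)).symm

theorem coeff_sum_X_mul {ι : Type*} [Fintype ι] {y : ι → σ} (hy : Function.Injective y) (j : ι)
    {m : σ →₀ ℕ} (hm : ∀ i, m (y i) = 0) (p : ι → MvPolynomial σ R) :
    coeff (Finsupp.single (y j) 1 + m) (∑ i, X (y i) * p i) = coeff m (p j) := by
  rw [coeff_sum, Finset.sum_eq_single_of_mem j (Finset.mem_univ j), coeff_X_mul]
  intro i _ hij
  rw [coeff_X_mul', if_neg]
  simp [hm, hy.ne hij.symm]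

end Diagonal

section WeightedEuler

variable {ι σ R : Type*} [Fintype ι] [CommSemiring R]

/-- The weight `∑ j, a j * m (x j)` of an exponent `m` along the variables `x j`. -/
def weightAlong (x : ι → σ) (a : ι → R) (m : σ →₀ ℕ) : R :=
  ∑ j, a j * m (x j)

/-- The weighted Euler derivation `∑ j, a j x_j ∂/∂x_j`. -/
def weightedEuler (x : ι → σ) (a : ι → R) (p : MvPolynomial σ R) : MvPolynomial σ R :=
  ∑ j, C (a j) * X (x j) * pderiv (x j) p

theorem weightedEuler_eq_diagonalMap (x : ι → σ) (a : ι → R) (p : MvPolynomial σ R) :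
    weightedEuler x a p = diagonalMap (weightAlong x a) p := by
  ext m
  simp only [weightedEuler, weightAlong, coeff_sum, coeff_diagonalMap, Finset.sum_mul, mul_assoc,
    coeff_C_mul, coeff_X_mul_pderiv]

theorem weightAlong_add_single {x : ι → σ} (hx : Function.Injective x) (a : ι → R) (m : σ →₀ ℕ)
    (j : ι) : weightAlong x a (m + Finsupp.single (x j) 1) = weightAlong x a m + a j := by
  simp [weightAlong, Finsupp.single_apply, hx.eq_iff, mul_add, Finset.sum_add_distrib]

theorem weightAlong_add_single_of_forall_ne {x : ι → σ} {v : σ} (hv : ∀ j, x j ≠ v)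
    (a : ι → R) (m : σ →₀ ℕ) : weightAlong x a (m + Finsupp.single v 1) = weightAlong x a m := by
  simp [weightAlong, fun j => (hv j).symm]

theorem abs_weightAlong_le (x : ι → σ) (a : ι → ℝ) (m : σ →₀ ℕ) :
    |weightAlong x a m| ≤ weightAlong x (fun j => |a j|) m := by
  refine (Finset.abs_sum_le_sum_abs _ _).trans_eq (Finset.sum_congr rfl fun j _ => ?_)
  rw [abs_mul, Nat.abs_cast]

end WeightedEuler

section Corrections

variable {ι σ : Type*} [Fintype ι]

/-- The polynomial `ψ⁰` attached to `φ`. On exponents of weight `W = 0` also `S = 0`, so the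
convention `0 / 0 = 0` removes the monomials with `(α'', β') = (0, 0)`. -/
def firstCorrection (x : ι → σ) (lam : ι → ℝ) (φ : MvPolynomial σ ℂ) : MvPolynomial σ ℂ :=
  diagonalMap (fun m => Complex.I *
    ((weightAlong x lam m / weightAlong x (fun j => |lam j|) m : ℝ) : ℂ)) φ

/-- The real scalar `(|l| S - l W) / (W (W + |l|))`, with value `0` when `W = 0`. For
`S = a - b` and `W = a + b` the numerator is `2 |l| a` if `l < 0` and `-2 |l| b` if `l > 0`. -/
def correctionFactor (l S W : ℝ) : ℝ :=
  (|l| * S - l * W) / (W * (W + |l|))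

/-- The polynomial `ψ¹` attached to `φ`; the variable `y j` plays the role of `w_j` or `w̄_j`. -/
def secondCorrection (x y : ι → σ) (lam : ι → ℝ) (φ : MvPolynomial σ ℂ) : MvPolynomial σ ℂ :=
  ∑ j, X (y j) * diagonalMap (fun m => Complex.I *
    (correctionFactor (lam j) (weightAlong x lam m)
      (weightAlong x (fun j => |lam j|) m) : ℂ)) (pderiv (x j) φ)

theorem mul_correctionFactor {l S W : ℝ} (hl : l ≠ 0) (hS : |S| ≤ W) :
    W * correctionFactor l S W = |l| * ((S + l) / (W + |l|)) - l := by
  have hW : 0 ≤ W := (abs_nonneg S).trans hS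
  have hWl : W + |l| ≠ 0 := (add_pos_of_nonneg_of_pos hW (abs_pos.mpr hl)).ne'
  rw [correctionFactor]
  rcases hW.eq_or_lt' with rfl | hW
  · obtain rfl : S = 0 := abs_nonpos_iff.mp hS
    simp [mul_div_cancel₀ l (abs_ne_zero.mpr hl)]
  · field_simp
    ring

theorem two_I_mul_correctionFactor {l S W : ℝ} (hl : l ≠ 0) (hS : |S| ≤ W) :
    2 * Complex.I * (W : ℂ) * (Complex.I * (correctionFactor l S W : ℂ)) =
      ((2 * l : ℝ) : ℂ) * (Complex.I * ((SignType.sign l : ℝ) : ℂ) *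
        (Complex.I * (((S + l) / (W + |l|) : ℝ) : ℂ)) + 1) := by
  have hfactor := congrArg ((↑) : ℝ → ℂ) (mul_correctionFactor hl hS)
  have hsign := congrArg ((↑) : ℝ → ℂ) (self_mul_sign l)
  generalize ((S + l) / (W + |l|) : ℝ) = r at *
  push_cast at hfactor hsign ⊢
  linear_combination 2 * Complex.I ^ 2 * hfactor - 2 * Complex.I ^ 2 * r * hsign
    - 2 * l * Complex.I_sq

theorem statement3_general {x y : ι → σ} (hx : Function.Injective x) (hxy : ∀ i j, x i ≠ y j)
    {lam : ι → ℝ} (hlam : ∀ j, lam j ≠ 0) (φ : MvPolynomial σ ℂ) :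
    weightedEuler x (fun j => 2 * Complex.I * ((|lam j| : ℝ) : ℂ)) (secondCorrection x y lam φ) =
      ∑ j, C ((2 * lam j : ℝ) : ℂ) * X (y j) *
        (C (Complex.I * ((SignType.sign (lam j) : ℝ) : ℂ)) *
          pderiv (x j) (firstCorrection x lam φ) + pderiv (x j) φ) := by
  have hweight (m : σ →₀ ℕ) : weightAlong x (fun j => 2 * Complex.I * ((|lam j| : ℝ) : ℂ)) m =
      2 * Complex.I * ((weightAlong x (fun j => |lam j|) m : ℝ) : ℂ) := by
    simp [weightAlong, Finset.mul_sum, mul_assoc]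
  rw [weightedEuler_eq_diagonalMap, secondCorrection, map_sum]
  refine Finset.sum_congr rfl fun j _ => ?_
  rw [diagonalMap_X_mul, diagonalMap_diagonalMap, firstCorrection, pderiv_diagonalMap,
    mul_comm (C _) (X _), mul_assoc]
  congr 1
  ext m
  simp only [weightAlong_add_single_of_forall_ne (hxy · j), weightAlong_add_single hx, hweight,
    coeff_diagonalMap, coeff_C_mul, coeff_add]
  rw [two_I_mul_correctionFactor (hlam j) (abs_weightAlong_le x lam m)]
  ring

end Corrections

section MultiIndex

variable {n : ℕ}

theorem sum_add_eIdx (α : Fin n → ℕ) (j : Fin n) :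
    ∑ t, (α + eIdx j) t = (∑ t, α t) + 1 := by
  simp [Finset.sum_add_distrib, eIdx]

theorem factM_add_eIdx (α : Fin n → ℕ) (j : Fin n) :
    factM (α + eIdx j) = (α j + 1) * factM α := by
  have hfactor : α j + 1 = ∏ t : Fin n, if t = j then α j + 1 else 1 := by simp
  rw [hfactor, factM, factM, ← Finset.prod_mul_distrib]
  refine Finset.prod_congr rfl fun t _ => ?_
  by_cases h : t = j
  · simp [h, eIdx, Nat.factorial_succ]
  · simp [h, eIdx]

theorem factM_ne_zero (α : Fin n → ℕ) : factM α ≠ 0 :=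
  Finset.prod_ne_zero_iff.mpr fun j _ => (α j).factorial_ne_zero

theorem exists_eq_mIdx (m : Var n →₀ ℕ) : ∃ α β γ δ : Fin n → ℕ, m = mIdx α β γ δ := by
  refine ⟨fun j => m (zbV j), fun j => m (zV j), fun j => m (wbV j), fun j => m (wV j), ?_⟩
  ext ⟨k, j⟩
  fin_cases k <;> rfl

theorem mIdx_inj {α β γ δ α' β' γ' δ' : Fin n → ℕ} :
    mIdx α β γ δ = mIdx α' β' γ' δ' ↔ α = α' ∧ β = β' ∧ γ = γ' ∧ δ = δ' := by
  refine ⟨fun h => ⟨?_, ?_, ?_, ?_⟩, by rintro ⟨rfl, rfl, rfl, rfl⟩; rfl⟩ <;> ext j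
  · exact DFunLike.congr_fun h (zbV j)
  · exact DFunLike.congr_fun h (zV j)
  · exact DFunLike.congr_fun h (wbV j)
  · exact DFunLike.congr_fun h (wV j)

theorem mIdx_add_single_zV (α β γ δ : Fin n → ℕ) (j : Fin n) :
    mIdx α β γ δ + Finsupp.single (zV j) 1 = mIdx α (β + eIdx j) γ δ := by
  ext ⟨k, t⟩
  fin_cases k <;> simp [mIdx, zV, eIdx, Finsupp.single_apply, eq_comm]

theorem mIdx_add_single_zbV (α β γ δ : Fin n → ℕ) (j : Fin n) :
    mIdx α β γ δ + Finsupp.single (zbV j) 1 = mIdx (α + eIdx j) β γ δ := by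
  ext ⟨k, t⟩
  fin_cases k <;> simp [mIdx, zbV, eIdx, Finsupp.single_apply, eq_comm]

theorem single_wV_add_mIdx (α β : Fin n → ℕ) (j : Fin n) :
    Finsupp.single (wV j) 1 + mIdx α β 0 0 = mIdx α β 0 (eIdx j) := by
  ext ⟨k, t⟩
  fin_cases k <;> simp [mIdx, wV, eIdx, Finsupp.single_apply, eq_comm]

theorem single_wbV_add_mIdx (α β : Fin n → ℕ) (j : Fin n) :
    Finsupp.single (wbV j) 1 + mIdx α β 0 0 = mIdx α β (eIdx j) 0 := by
  ext ⟨k, t⟩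
  fin_cases k <;> simp [mIdx, wbV, eIdx, Finsupp.single_apply, eq_comm]

end MultiIndex

section ActiveVariables

variable {n : ℕ} (q : ℕ) (lam : Fin n → ℝ)

/-- The variable `x_j` along which `T` differentiates: `z_j` for `j ≤ q` and `z̄_j` for `j > q`. -/
def activeVar (j : Fin n) : Var n :=
  if (j : ℕ) < q then zV j else zbV j

/-- The variable `y_j` paired with `x_j`: `w_j` for `j ≤ q` and `w̄_j` for `j > q`. -/
def partnerVar (j : Fin n) : Var n :=
  if (j : ℕ) < q then wV j else wbV j

theorem activeVar_injective : Function.Injective (activeVar (n := n) q) := by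
  refine Function.LeftInverse.injective (g := Prod.snd) fun j => ?_
  unfold activeVar
  split_ifs <;> rfl

theorem partnerVar_injective : Function.Injective (partnerVar (n := n) q) := by
  refine Function.LeftInverse.injective (g := Prod.snd) fun j => ?_
  unfold partnerVar
  split_ifs <;> rfl

theorem activeVar_ne_partnerVar (i j : Fin n) : activeVar q i ≠ partnerVar q j := by
  unfold activeVar partnerVar
  split_ifs <;> simp [zV, zbV, wV, wbV]

theorem mIdx_partnerVar (α β : Fin n → ℕ) (j : Fin n) : mIdx α β 0 0 (partnerVar q j) = 0 := by
  unfold partnerVar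
  split_ifs <;> rfl

theorem Tder_eq_weightedEuler (p : MvPolynomial (Var n) ℂ) :
    Tder q lam p =
      weightedEuler (activeVar q) (fun j => 2 * Complex.I * ((|lam j| : ℝ) : ℂ)) p := by
  refine Finset.sum_congr rfl fun j _ => ?_
  unfold activeVar
  split_ifs <;> rfl

theorem weightAlong_activeVar (a : Fin n → ℝ) (α β γ δ : Fin n → ℕ) :
    weightAlong (activeVar q) a (mIdx α β γ δ) = swgt q a α β := by
  refine Finset.sum_congr rfl fun j _ => ?_
  unfold activeVar
  split_ifs <;> rfl

theorem swgt_abs (α β : Fin n → ℕ) : swgt q (fun j => |lam j|) α β = wgt q lam α β :=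
  rfl

theorem wgt_eq_wA_add_wB (α β : Fin n → ℕ) : wgt q lam α β = wA q lam α + wB q lam β := by
  simp only [wgt, wA, wB, ← Finset.sum_add_distrib]
  refine Finset.sum_congr rfl fun j _ => ?_
  by_cases h : (j : ℕ) < q
  · simp [h, not_le.mpr h]
  · simp [h, not_lt.mp h]

theorem swgt_eq_wA_sub_wB {q : ℕ} {lam : Fin n → ℝ} (hneg : ∀ j : Fin n, (j : ℕ) < q → lam j < 0)
    (hpos : ∀ j : Fin n, q ≤ (j : ℕ) → 0 < lam j) (α β : Fin n → ℕ) :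
    swgt q lam α β = wA q lam α - wB q lam β := by
  simp only [swgt, wA, wB, ← Finset.sum_sub_distrib]
  refine Finset.sum_congr rfl fun j _ => ?_
  by_cases h : (j : ℕ) < q
  · simp [h, not_le.mpr h, abs_of_neg (hneg j h)]
  · simp [h, not_lt.mp h, abs_of_pos (hpos j (not_lt.mp h))]

theorem lam_ne_zero {q : ℕ} {lam : Fin n → ℝ} (hneg : ∀ j : Fin n, (j : ℕ) < q → lam j < 0)
    (hpos : ∀ j : Fin n, q ≤ (j : ℕ) → 0 < lam j) (j : Fin n) : lam j ≠ 0 :=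
  (lt_or_ge (j : ℕ) q).elim (fun hj => (hneg j hj).ne) fun hj => (hpos j hj).ne'

theorem partnerVar_mul_sign_pderiv_activeVar {q : ℕ} {lam : Fin n → ℝ}
    (hneg : ∀ j : Fin n, (j : ℕ) < q → lam j < 0) (hpos : ∀ j : Fin n, q ≤ (j : ℕ) → 0 < lam j)
    (f g : MvPolynomial (Var n) ℂ) (j : Fin n) :
    C ((2 * lam j : ℝ) : ℂ) * X (partnerVar q j) *
        (C (Complex.I * ((SignType.sign (lam j) : ℝ) : ℂ)) * pderiv (activeVar q j) f +
          pderiv (activeVar q j) g) =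
      if (j : ℕ) < q then
        C ((2 * lam j : ℝ) : ℂ) * X (wV j) * (C (- Complex.I) * pderiv (zV j) f + pderiv (zV j) g)
      else
        C ((2 * lam j : ℝ) : ℂ) * X (wbV j) *
          (C Complex.I * pderiv (zbV j) f + pderiv (zbV j) g) := by
  by_cases hj : (j : ℕ) < q
  · simp [activeVar, partnerVar, hj, hneg j hj]
  · simp [activeVar, partnerVar, hj, hpos j (not_lt.mp hj)]

variable {q}

theorem swgt_eq_zero_of_cond0 {α β : Fin n → ℕ} (h : cond0 q α β) : swgt q lam α β = 0 := by
  refine Finset.sum_eq_zero fun j _ => ?_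
  split_ifs with hj
  · simp [(h j).2 hj]
  · simp [(h j).1 (not_lt.mp hj)]

theorem wA_eq_zero {α : Fin n → ℕ} (h : ∀ t : Fin n, q ≤ (t : ℕ) → α t = 0) : wA q lam α = 0 :=
  Finset.sum_eq_zero fun t _ => by
    split_ifs with ht
    · simp [h t ht]
    · rfl

theorem wB_eq_zero {β : Fin n → ℕ} (h : ∀ t : Fin n, (t : ℕ) < q → β t = 0) : wB q lam β = 0 :=
  Finset.sum_eq_zero fun t _ => by
    split_ifs with ht
    · simp [h t ht]
    · rfl

end ActiveVariables

section Taylor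

variable {n q d : ℕ} {lam : Fin n → ℝ} {c : (Fin n → ℕ) → (Fin n → ℕ) → ℂ}
  {φ ψ : MvPolynomial (Var n) ℂ}

/-- `φ` is the homogeneous polynomial `∑_{|α|+|β|=d} c α β / (α! β!) z̄^α z^β`. -/
def HasTaylorCoeffs (d : ℕ) (c : (Fin n → ℕ) → (Fin n → ℕ) → ℂ)
    (φ : MvPolynomial (Var n) ℂ) : Prop :=
  ∀ α β γ δ : Fin n → ℕ, coeff (mIdx α β γ δ) φ =
    if (∑ j, α j) + (∑ j, β j) = d ∧ γ = 0 ∧ δ = 0 then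
      c α β / ((factM α * factM β : ℕ) : ℂ)
    else 0

theorem HasTaylorCoeffs.pderiv_zV (hφ : HasTaylorCoeffs (d + 1) c φ) (j : Fin n) :
    HasTaylorCoeffs d (fun α β => c α (β + eIdx j)) (pderiv (zV j) φ) := by
  intro α β γ δ
  have hβ : mIdx α β γ δ (zV j) = β j := rfl
  have hj : (β j : ℂ) + 1 ≠ 0 := Nat.cast_add_one_ne_zero _
  rw [coeff_pderiv, mIdx_add_single_zV, hφ, sum_add_eIdx, factM_add_eIdx, hβ]
  simp only [← add_assoc, Nat.add_right_cancel_iff, ite_mul, zero_mul]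
  congr 1
  push_cast
  field_simp

theorem HasTaylorCoeffs.pderiv_zbV (hφ : HasTaylorCoeffs (d + 1) c φ) (j : Fin n) :
    HasTaylorCoeffs d (fun α β => c (α + eIdx j) β) (pderiv (zbV j) φ) := by
  intro α β γ δ
  have hα : mIdx α β γ δ (zbV j) = α j := rfl
  have hj : (α j : ℂ) + 1 ≠ 0 := Nat.cast_add_one_ne_zero _
  rw [coeff_pderiv, mIdx_add_single_zbV, hφ, sum_add_eIdx, factM_add_eIdx, hα]
  simp only [add_right_comm _ 1, Nat.add_right_cancel_iff, ite_mul, zero_mul]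
  congr 1
  push_cast
  field_simp

theorem HasTaylorCoeffs.eq_firstCorrection (hφ : HasTaylorCoeffs d c φ)
    (hψ : ∀ α β γ δ : Fin n → ℕ, coeff (mIdx α β γ δ) ψ =
      if (∑ j, α j) + (∑ j, β j) = d ∧ γ = 0 ∧ δ = 0 ∧ ¬ cond0 q α β then
        Complex.I * ((swgt q lam α β / wgt q lam α β : ℝ) : ℂ) *
          (c α β / ((factM α * factM β : ℕ) : ℂ))
      else 0) :
    ψ = firstCorrection (activeVar q) lam φ := by
  ext m
  obtain ⟨α, β, γ, δ, rfl⟩ := exists_eq_mIdx m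
  rw [firstCorrection, coeff_diagonalMap, weightAlong_activeVar, weightAlong_activeVar,
    swgt_abs, hψ, hφ]
  by_cases h : cond0 q α β
  · simp [h, swgt_eq_zero_of_cond0 lam h]
  · simp only [h, not_false_eq_true, and_true, mul_ite, mul_zero]

theorem coeff_secondCorrection (lam : Fin n → ℝ) (φ : MvPolynomial (Var n) ℂ) (j : Fin n)
    (α β : Fin n → ℕ) :
    coeff (Finsupp.single (partnerVar q j) 1 + mIdx α β 0 0)
        (secondCorrection (activeVar q) (partnerVar q) lam φ) =
      Complex.I * (correctionFactor (lam j) (swgt q lam α β) (wgt q lam α β) : ℂ) *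
        coeff (mIdx α β 0 0) (pderiv (activeVar q j) φ) := by
  rw [secondCorrection,
    coeff_sum_X_mul (partnerVar_injective q) j (mIdx_partnerVar q α β), coeff_diagonalMap,
    weightAlong_activeVar, weightAlong_activeVar, swgt_abs]

theorem HasTaylorCoeffs.coeff_secondCorrection_wV
    (hneg : ∀ j : Fin n, (j : ℕ) < q → lam j < 0) (hpos : ∀ j : Fin n, q ≤ (j : ℕ) → 0 < lam j)
    (hφ : HasTaylorCoeffs (d + 1) c φ) {j : Fin n} (hj : (j : ℕ) < q) {α β : Fin n → ℕ}
    (hd : (∑ t, α t) + (∑ t, β t) = d) :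
    coeff (mIdx α β 0 (eIdx j)) (secondCorrection (activeVar q) (partnerVar q) lam φ) =
      Complex.I * (c α (β + eIdx j) / ((factM α * factM β : ℕ) : ℂ)) *
        ((2 * |lam j| * wA q lam α /
          ((wA q lam α + wB q lam β) * (wA q lam α + wB q lam β + |lam j|)) : ℝ) : ℂ) := by
  have hfactor : correctionFactor (lam j) (swgt q lam α β) (wgt q lam α β) =
      2 * |lam j| * wA q lam α /
        ((wA q lam α + wB q lam β) * (wA q lam α + wB q lam β + |lam j|)) := by
    rw [correctionFactor, swgt_eq_wA_sub_wB hneg hpos, wgt_eq_wA_add_wB, abs_of_neg (hneg j hj)]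
    ring
  have hcoeff := coeff_secondCorrection (q := q) lam φ j α β
  rw [partnerVar, activeVar, if_pos hj, if_pos hj, single_wV_add_mIdx, hφ.pderiv_zV j,
    if_pos ⟨hd, rfl, rfl⟩, hfactor] at hcoeff
  rw [hcoeff, mul_right_comm]

theorem HasTaylorCoeffs.coeff_secondCorrection_wbV
    (hneg : ∀ j : Fin n, (j : ℕ) < q → lam j < 0) (hpos : ∀ j : Fin n, q ≤ (j : ℕ) → 0 < lam j)
    (hφ : HasTaylorCoeffs (d + 1) c φ) {j : Fin n} (hj : q ≤ (j : ℕ)) {α β : Fin n → ℕ}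
    (hd : (∑ t, α t) + (∑ t, β t) = d) :
    coeff (mIdx α β (eIdx j) 0) (secondCorrection (activeVar q) (partnerVar q) lam φ) =
      - Complex.I * (c (α + eIdx j) β / ((factM α * factM β : ℕ) : ℂ)) *
        ((2 * |lam j| * wB q lam β /
          ((wA q lam α + wB q lam β) * (wA q lam α + wB q lam β + |lam j|)) : ℝ) : ℂ) := by
  have hfactor : correctionFactor (lam j) (swgt q lam α β) (wgt q lam α β) =
      -(2 * |lam j| * wB q lam β /
        ((wA q lam α + wB q lam β) * (wA q lam α + wB q lam β + |lam j|))) := by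
    rw [correctionFactor, swgt_eq_wA_sub_wB hneg hpos, wgt_eq_wA_add_wB, abs_of_pos (hpos j hj)]
    ring
  have hcoeff := coeff_secondCorrection (q := q) lam φ j α β
  rw [partnerVar, activeVar, if_neg hj.not_gt, if_neg hj.not_gt, single_wbV_add_mIdx,
    hφ.pderiv_zbV j, if_pos ⟨hd, rfl, rfl⟩, hfactor] at hcoeff
  rw [hcoeff, Complex.ofReal_neg]
  ring

theorem HasTaylorCoeffs.coeff_secondCorrection_eq_zero (hφ : HasTaylorCoeffs (d + 1) c φ)
    {α β γ δ : Fin n → ℕ}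
    (h : ¬ ((∑ t, α t) + (∑ t, β t) = d ∧
      ((∃ j : Fin n, (j : ℕ) < q ∧ γ = 0 ∧ δ = eIdx j) ∨
        (∃ j : Fin n, q ≤ (j : ℕ) ∧ δ = 0 ∧ γ = eIdx j)))) :
    coeff (mIdx α β γ δ) (secondCorrection (activeVar q) (partnerVar q) lam φ) = 0 := by
  rw [secondCorrection, coeff_sum]
  refine Finset.sum_eq_zero fun j _ => coeff_X_mul_eq_zero fun k hk => ?_
  obtain ⟨α', β', γ', δ', rfl⟩ := exists_eq_mIdx k
  suffices hzero : coeff (mIdx α' β' γ' δ') (pderiv (activeVar q j) φ) = 0 by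
    rw [coeff_diagonalMap, hzero, mul_zero]
  by_cases hj : (j : ℕ) < q
  · rw [activeVar, if_pos hj, hφ.pderiv_zV j, if_neg]
    rintro ⟨hd, rfl, rfl⟩
    rw [partnerVar, if_pos hj, single_wV_add_mIdx, mIdx_inj] at hk
    obtain ⟨rfl, rfl, rfl, rfl⟩ := hk
    exact h ⟨hd, Or.inl ⟨j, hj, rfl, rfl⟩⟩
  · rw [activeVar, if_neg hj, hφ.pderiv_zbV j, if_neg]
    rintro ⟨hd, rfl, rfl⟩
    rw [partnerVar, if_neg hj, single_wbV_add_mIdx, mIdx_inj] at hk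
    obtain ⟨rfl, rfl, rfl, rfl⟩ := hk
    exact h ⟨hd, Or.inr ⟨j, not_lt.mp hj, rfl, rfl⟩⟩

theorem HasTaylorCoeffs.eq_secondCorrection
    (hneg : ∀ j : Fin n, (j : ℕ) < q → lam j < 0) (hpos : ∀ j : Fin n, q ≤ (j : ℕ) → 0 < lam j)
    (hφ : HasTaylorCoeffs (d + 1) c φ)
    (hw : ∀ j : Fin n, (j : ℕ) < q → ∀ α β : Fin n → ℕ, (∑ t, α t) + (∑ t, β t) = d →
      coeff (mIdx α β 0 (eIdx j)) ψ =
        if ¬ (∀ t : Fin n, q ≤ (t : ℕ) → α t = 0) then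
          Complex.I * (c α (fun t => β t + eIdx j t) / ((factM α * factM β : ℕ) : ℂ)) *
            ((2 * |lam j| * wA q lam α /
              ((wA q lam α + wB q lam β) * (wA q lam α + wB q lam β + |lam j|)) : ℝ) : ℂ)
        else 0)
    (hwb : ∀ j : Fin n, q ≤ (j : ℕ) → ∀ α β : Fin n → ℕ, (∑ t, α t) + (∑ t, β t) = d →
      coeff (mIdx α β (eIdx j) 0) ψ =
        if ¬ (∀ t : Fin n, (t : ℕ) < q → β t = 0) then
          - Complex.I * (c (fun t => α t + eIdx j t) β / ((factM α * factM β : ℕ) : ℂ)) *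
            ((2 * |lam j| * wB q lam β /
              ((wA q lam α + wB q lam β) * (wA q lam α + wB q lam β + |lam j|)) : ℝ) : ℂ)
        else 0)
    (hzero : ∀ α β γ δ : Fin n → ℕ,
      ¬ ((∑ t, α t) + (∑ t, β t) = d ∧
        ((∃ j : Fin n, (j : ℕ) < q ∧ γ = 0 ∧ δ = eIdx j) ∨
          (∃ j : Fin n, q ≤ (j : ℕ) ∧ δ = 0 ∧ γ = eIdx j))) →
      coeff (mIdx α β γ δ) ψ = 0) :
    ψ = secondCorrection (activeVar q) (partnerVar q) lam φ := by
  ext m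
  obtain ⟨α, β, γ, δ, rfl⟩ := exists_eq_mIdx m
  by_cases h : (∑ t, α t) + (∑ t, β t) = d ∧
    ((∃ j : Fin n, (j : ℕ) < q ∧ γ = 0 ∧ δ = eIdx j) ∨
      (∃ j : Fin n, q ≤ (j : ℕ) ∧ δ = 0 ∧ γ = eIdx j))
  · obtain ⟨hd, ⟨j, hj, rfl, rfl⟩ | ⟨j, hj, rfl, rfl⟩⟩ := h
    · rw [hw j hj α β hd, hφ.coeff_secondCorrection_wV hneg hpos hj hd, ite_not]
      split_ifs with hα
      · simp [wA_eq_zero lam hα]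
      · rfl
    · rw [hwb j hj α β hd, hφ.coeff_secondCorrection_wbV hneg hpos hj hd, ite_not]
      split_ifs with hβ
      · simp [wB_eq_zero lam hβ]
      · rfl
  · rw [hzero α β γ δ h, hφ.coeff_secondCorrection_eq_zero h]

end Taylor

/-- `T ψ₃¹ = Σ_{j≤q} 2λ_j w_j (−i ∂ψ₃⁰/∂z_j + ∂φ₃/∂z_j)
 + Σ_{j>q} 2λ_j w̄_j (i ∂ψ₃⁰/∂z̄_j + ∂φ₃/∂z̄_j)`, where `φ₃`, `ψ₃⁰` and `ψ₃¹` are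
the polynomials of the paper, described through their coefficients. -/
theorem statement3 (n q : ℕ) (hn : 1 ≤ n) (hq : q ≤ n) (lam : Fin n → ℝ)
    (hneg : ∀ j : Fin n, (j : ℕ) < q → lam j < 0)
    (hpos : ∀ j : Fin n, q ≤ (j : ℕ) → 0 < lam j)
    (c : (Fin n → ℕ) → (Fin n → ℕ) → ℂ)
    (φ₃ ψ₃₀ ψ₃₁ : MvPolynomial (Var n) ℂ)
    (hφ : ∀ α β γ δ : Fin n → ℕ,
      coeff (mIdx α β γ δ) φ₃ =
        if (∑ j, α j) + (∑ j, β j) = 3 ∧ γ = 0 ∧ δ = 0 then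
          c α β / ((factM α * factM β : ℕ) : ℂ)
        else 0)
    (hψ0 : ∀ α β γ δ : Fin n → ℕ,
      coeff (mIdx α β γ δ) ψ₃₀ =
        if (∑ j, α j) + (∑ j, β j) = 3 ∧ γ = 0 ∧ δ = 0 ∧ ¬ cond0 q α β then
          Complex.I * ((swgt q lam α β / wgt q lam α β : ℝ) : ℂ) *
            (c α β / ((factM α * factM β : ℕ) : ℂ))
        else 0)
    -- the coefficients of `ψ₃¹` on the monomials `z̄^α z^β w_j`, `1 ≤ j ≤ q`, `|α|+|β| = 2`:
    (hψ1a : ∀ (j : Fin n), (j : ℕ) < q → ∀ α β : Fin n → ℕ,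
      (∑ t, α t) + (∑ t, β t) = 2 →
      coeff (mIdx α β 0 (eIdx j)) ψ₃₁ =
        if ¬ (∀ t : Fin n, q ≤ (t : ℕ) → α t = 0) then
          Complex.I * (c α (fun t => β t + eIdx j t) / ((factM α * factM β : ℕ) : ℂ)) *
            ((2 * |lam j| * wA q lam α /
              ((wA q lam α + wB q lam β) * (wA q lam α + wB q lam β + |lam j|)) : ℝ) : ℂ)
        else 0)
    -- the coefficients of `ψ₃¹` on the monomials `z̄^α z^β w̄_j`, `q+1 ≤ j ≤ n`, `|α|+|β| = 2`:
    (hψ1b : ∀ (j : Fin n), q ≤ (j : ℕ) → ∀ α β : Fin n → ℕ,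
      (∑ t, α t) + (∑ t, β t) = 2 →
      coeff (mIdx α β (eIdx j) 0) ψ₃₁ =
        if ¬ (∀ t : Fin n, (t : ℕ) < q → β t = 0) then
          - Complex.I * (c (fun t => α t + eIdx j t) β / ((factM α * factM β : ℕ) : ℂ)) *
            ((2 * |lam j| * wB q lam β /
              ((wA q lam α + wB q lam β) * (wA q lam α + wB q lam β + |lam j|)) : ℝ) : ℂ)
        else 0)
    -- all other coefficients of `ψ₃¹` vanish:
    (hψ1c : ∀ α β γ δ : Fin n → ℕ,
      ¬ ((∑ t, α t) + (∑ t, β t) = 2 ∧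
          ((∃ j : Fin n, (j : ℕ) < q ∧ γ = 0 ∧ δ = eIdx j) ∨
           (∃ j : Fin n, q ≤ (j : ℕ) ∧ δ = 0 ∧ γ = eIdx j))) →
      coeff (mIdx α β γ δ) ψ₃₁ = 0) :
    Tder q lam ψ₃₁ =
      ∑ j : Fin n,
        (if (j : ℕ) < q then
          C ((2 * lam j : ℝ) : ℂ) * X (wV j) *
            (C (- Complex.I) * pderiv (zV j) ψ₃₀ + pderiv (zV j) φ₃)
        else
          C ((2 * lam j : ℝ) : ℂ) * X (wbV j) *
            (C Complex.I * pderiv (zbV j) ψ₃₀ + pderiv (zbV j) φ₃)) := by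
  rw [HasTaylorCoeffs.eq_firstCorrection hφ hψ0,
    HasTaylorCoeffs.eq_secondCorrection hneg hpos hφ hψ1a hψ1b hψ1c, Tder_eq_weightedEuler,
    statement3_general (activeVar_injective q) (activeVar_ne_partnerVar q) (lam_ne_zero hneg hpos)]
  exact Finset.sum_congr rfl fun j _ => partnerVar_mul_sign_pderiv_activeVar hneg hpos _ _ j
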